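/- Let q be a complex number with 0 < |q| < 1 and fix a square root q^{1/2} of q. Let a be a complex number with |a| < 1 (and a ≠ 0). Then ∫₀^π h(cos θ; q^{1/2}) / h(cos θ; a) dθ = π (q^{1/2} a; q)_∞² / ((q; q)_∞ (a²; q)_∞). -/

import Mathlib

open Complex MeasureTheory

/-- The q-shifted factorial `(x; q)_∞ = ∏_{k=0}^∞ (1 - x q^k)`. -/
noncomputable def qp (q x : ℂ) : ℂ := ∏' k : ℕ, (1 - x * q ^ k)

/-- The finite q-shifted factorial `(x; q)_n = ∏_{k=0}^{n-1} (1 - x q^k)`. -/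
noncomputable def qpn (q x : ℂ) (n : ℕ) : ℂ := ∏ k ∈ Finset.range n, (1 - x * q ^ k)

/-- For `x = cos θ`, `h(x; λ) = (λ e^{iθ}; q)_∞ (λ e^{-iθ}; q)_∞`. -/
noncomputable def hh (q : ℂ) (θ : ℝ) (l : ℂ) : ℂ :=
  qp q (l * Complex.exp ((θ : ℂ) * Complex.I)) *
    qp q (l * Complex.exp (-((θ : ℂ) * Complex.I)))

/-!
Write `I(a)` for the average over the unit circle of `z ↦ h(z; u) / h(z; a)`, where
`h(z; l) = (l z; q)_∞ (l / z; q)_∞`; by the symmetry `z ↔ z⁻¹` the integral is `π I(a)`.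

Since `u ^ 2 = q`, the function `h(·; u)` is a theta function: `h(q z; u) = -(u z)⁻¹ h(z; u)`.
Multiplying the quotient by `1 - a / z` makes it holomorphic on the annulus `‖q‖ ≤ ‖z‖ ≤ 1`, so its
averages over the two boundary circles agree. With the quasi-periodicity this evaluates the first
Fourier coefficient of the quotient in terms of `I(a)`, which yields
`(1 - u a) I(q a) = (1 - a ^ 2) (1 + u a) I(a)`.
Hence `I(a) (a ^ 2; q)_∞ / (u a; q)_∞ ^ 2` is invariant under `a ↦ q a`. Being continuous at `0`, it
is constant on the unit disc, and at `a = u` the quotient is identically `1`.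
-/

open Metric Real Filter Topology

section CircleAverage

variable {E : Type*} [NormedAddCommGroup E]

lemma circleAverage_comp_const_mul [NormedSpace ℝ E] (f : ℂ → E) (w : ℂ) (R : ℝ) :
    circleAverage (fun z ↦ f (w * z)) 0 R = circleAverage f 0 (‖w‖ * R) := by
  have rotate (θ : ℝ) : w * circleMap 0 R θ = circleMap 0 (‖w‖ * R) (θ + w.arg) := by
    conv_lhs => rw [← norm_mul_exp_arg_mul_I w]
    simp only [circleMap_zero, ofReal_mul, ofReal_add, add_mul, Complex.exp_add]
    ring
  rw [circleAverage_eq_integral_add (f := f) w.arg, circleAverage_def]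
  simp only [rotate]

lemma circleAverage_eq_of_differentiable_on_annulus [NormedSpace ℂ E] {f : ℂ → E} {c : ℂ}
    {r R : ℝ} (hr : 0 < r) (hrR : r ≤ R) (hc : ContinuousOn f (closedBall c R \ ball c r))
    (hd : ∀ z ∈ ball c R \ closedBall c r, DifferentiableAt ℂ f z) :
    circleAverage f c R = circleAverage f c r := by
  rw [circleAverage_eq_circleIntegral (hr.trans_le hrR).ne', circleAverage_eq_circleIntegral hr.ne',
    circleIntegral_sub_center_inv_smul_eq_of_differentiable_on_annulus_off_countable hr hrR
      Set.countable_empty hc (by simpa using hd)]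

lemma integral_zero_pi_eq_pi_smul_circleAverage [NormedSpace ℝ E] {f : ℂ → E}
    (hf : CircleIntegrable f 0 1) (hinv : ∀ z ∈ sphere (0 : ℂ) 1, f z⁻¹ = f z) :
    ∫ θ in (0 : ℝ)..π, f (circleMap 0 1 θ) = π • circleAverage f 0 1 := by
  have reflect : ∫ θ in π..2 * π, f (circleMap 0 1 θ) = ∫ θ in (0 : ℝ)..π, f (circleMap 0 1 θ) := by
    have symm (θ : ℝ) : f (circleMap 0 1 (2 * π - θ)) = f (circleMap 0 1 θ) := by
      rw [← hinv _ (circleMap_mem_sphere 0 zero_le_one θ), circleMap_zero_inv, inv_one,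
        sub_eq_neg_add, periodic_circleMap]
    have h := intervalIntegral.integral_comp_sub_left (a := 0) (b := π)
      (fun θ ↦ f (circleMap 0 1 θ)) (2 * π)
    simp only [symm, sub_zero, show 2 * π - π = π by ring] at h
    exact h.symm
  have mem_pi : π ∈ Set.uIcc 0 (2 * π) := by
    rw [Set.uIcc_of_le two_pi_pos.le]
    exact ⟨pi_pos.le, by linarith [pi_pos]⟩
  rw [circleAverage_def, ← intervalIntegral.integral_add_adjacent_intervals (b := π)
    (hf.mono_set (Set.uIcc_subset_uIcc_left mem_pi))
    (hf.mono_set (Set.uIcc_subset_uIcc_right mem_pi)), reflect, ← two_smul ℝ, smul_smul, smul_smul]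
  rw [show π * (2 * π)⁻¹ * 2 = 1 by field_simp, one_smul]

lemma continuousOn_circleAverage_of_continuousOn_uncurry [NormedSpace ℝ E] {X : Type*}
    [TopologicalSpace X] {f : X → ℂ → E} {s : Set X} {c : ℂ} {R : ℝ}
    (hf : ContinuousOn (fun p : X × ℂ ↦ f p.1 p.2) (s ×ˢ sphere c |R|)) :
    ContinuousOn (fun x ↦ circleAverage (f x) c R) s := by
  rw [continuousOn_iff_continuous_domRestrict]
  apply (intervalIntegral.continuous_parametric_intervalIntegral_of_continuous' _ _ _).const_smul
  exact hf.comp_continuous (f := fun p : s × ℝ ↦ ((p.1 : X), circleMap c R p.2)) (by fun_prop)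
    fun p ↦ ⟨p.1.2, circleMap_mem_sphere' c R p.2⟩

end CircleAverage

lemma eq_apply_zero_of_apply_mul_eq {𝕜 Y : Type*} [NormedField 𝕜] [TopologicalSpace Y] [T2Space Y]
    {F : 𝕜 → Y} {q : 𝕜} (hq : ‖q‖ < 1) (hcont : ContinuousAt F 0)
    (hF : ∀ a, ‖a‖ < 1 → F (q * a) = F a) {a : 𝕜} (ha : ‖a‖ < 1) : F a = F 0 := by
  have norm_lt (n : ℕ) : ‖q ^ n * a‖ < 1 := by
    rw [norm_mul, norm_pow]
    exact mul_lt_one_of_nonneg_of_lt_one_right (pow_le_one₀ (norm_nonneg q) hq.le)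
      (norm_nonneg a) ha
  have iterate (n : ℕ) : F (q ^ n * a) = F a := by
    induction n with
    | zero => rw [pow_zero, one_mul]
    | succ n ih => rw [pow_succ', mul_assoc, hF _ (norm_lt n), ih]
  have tendsto_zero : Tendsto (fun n : ℕ ↦ q ^ n * a) atTop (𝓝 0) := by
    simpa using (tendsto_pow_atTop_nhds_zero_of_norm_lt_one hq).mul_const a
  exact tendsto_nhds_unique tendsto_const_nhds ((hcont.tendsto.comp tendsto_zero).congr iterate)

lemma norm_mul_lt_one {R : Type*} [NonUnitalSeminormedRing R] {x y : R} (hx : ‖x‖ < 1)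
    (hy : ‖y‖ ≤ 1) : ‖x * y‖ < 1 :=
  (norm_mul_le x y).trans_lt (mul_lt_one_of_nonneg_of_lt_one_left (norm_nonneg x) hx hy)

lemma norm_lt_one_of_sq_eq {q u : ℂ} (hq : ‖q‖ < 1) (hu : u ^ 2 = q) : ‖u‖ < 1 := by
  rwa [← pow_lt_one_iff_of_nonneg (norm_nonneg u) two_ne_zero, ← norm_pow, hu]

lemma mul_ne_one_of_mem_sphere {a z : ℂ} (ha : ‖a‖ < 1) (hz : z ∈ sphere (0 : ℂ) 1) :
    a * z ≠ 1 := by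
  intro h
  simpa [h] using norm_mul_lt_one ha (mem_sphere_zero_iff_norm.1 hz).le

lemma inv_mem_sphere_zero_one {z : ℂ} (hz : z ∈ sphere (0 : ℂ) 1) : z⁻¹ ∈ sphere (0 : ℂ) 1 := by
  rw [mem_sphere_zero_iff_norm] at hz ⊢
  rw [norm_inv, hz, inv_one]

section QShiftedFactorial

variable {q x : ℂ}

lemma summable_norm_neg_mul_pow (hq : ‖q‖ < 1) (x : ℂ) :
    Summable fun k : ℕ ↦ ‖-(x * q ^ k)‖ := by
  simpa using (summable_geometric_of_lt_one (norm_nonneg q) hq).mul_left ‖x‖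

lemma qp_eq_one_sub_mul (hq : ‖q‖ < 1) (x : ℂ) : qp q x = (1 - x) * qp q (q * x) := by
  have shift (k : ℕ) : 1 - x * q ^ (k + 1) = 1 - q * x * q ^ k := by ring
  have tail : Multipliable fun k : ℕ ↦ 1 - x * q ^ (k + 1) := by
    simpa only [shift, sub_eq_add_neg] using
      multipliable_one_add_of_summable (summable_norm_neg_mul_pow hq (q * x))
  simp only [qp, ← shift]
  rw [tprod_eq_zero_mul' (f := fun k ↦ 1 - x * q ^ k) tail, pow_zero, mul_one]

lemma qp_ne_zero (hq : ‖q‖ < 1) (hx : ∀ k : ℕ, x * q ^ k ≠ 1) : qp q x ≠ 0 := by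
  simp only [qp, sub_eq_add_neg]
  refine tprod_one_add_ne_zero_of_summable (fun k ↦ ?_) (summable_norm_neg_mul_pow hq x)
  rw [← sub_eq_add_neg]
  exact sub_ne_zero.2 (hx k).symm

lemma qp_ne_zero_of_norm_lt_one (hq : ‖q‖ < 1) (hx : ‖x‖ < 1) : qp q x ≠ 0 := by
  refine qp_ne_zero hq fun k hk ↦ ?_
  have : ‖x * q ^ k‖ < 1 :=
    norm_mul_lt_one hx ((norm_pow q k).trans_le (pow_le_one₀ (norm_nonneg q) hq.le))
  simp [hk] at this

lemma differentiable_qp (hq : ‖q‖ < 1) : Differentiable ℂ (qp q) := by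
  intro x
  have locally_uniform : HasProdLocallyUniformlyOn (fun (k : ℕ) (y : ℂ) ↦ 1 + -(y * q ^ k))
      (qp q) (ball 0 (‖x‖ + 1)) := by
    simp only [funext fun y ↦ show qp q y = ∏' k : ℕ, (1 + -(y * q ^ k)) by
      simp only [qp, sub_eq_add_neg]]
    refine Summable.hasProdLocallyUniformlyOn_nat_one_add isOpen_ball
      ((summable_geometric_of_lt_one (norm_nonneg q) hq).mul_left (‖x‖ + 1))
      (.of_forall fun k y hy ↦ ?_) fun k ↦ by fun_prop
    rw [norm_neg, norm_mul, norm_pow]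
    gcongr
    exact (mem_ball_zero_iff.1 hy).le
  refine (locally_uniform.differentiableOn (.of_forall fun s ↦ ?_) isOpen_ball).differentiableAt
    (isOpen_ball.mem_nhds (by simp))
  simpa only [Finset.prod_fn] using DifferentiableOn.finsetProd fun k _ ↦ by fun_prop

lemma continuous_qp (hq : ‖q‖ < 1) : Continuous (qp q) := (differentiable_qp hq).continuous

end QShiftedFactorial

/-- The product `(l z; q)_∞ (l / z; q)_∞`, which extends `h(cos θ; l)` from the points
`z = e^{iθ}` of the unit circle to the punctured plane. -/
noncomputable def hLaurent (q l z : ℂ) : ℂ := qp q (l * z) * qp q (l * z⁻¹)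

/-- The integrand `h(z; u) / h(z; a)` as a function on the punctured plane. -/
noncomputable def hRatio (q u a z : ℂ) : ℂ := hLaurent q u z / hLaurent q a z

/-- The product `(1 - a / z) h(z; u) / h(z; a)`, with the factor `1 - a / z` cancelled against
`(a / z; q)_∞` so that there is no singularity at `z = a`. -/
noncomputable def hRatioRegularized (q u a z : ℂ) : ℂ :=
  hLaurent q u z / (qp q (a * z) * qp q (q * (a * z⁻¹)))

section Laurent

variable {q u a z : ℂ}

lemma hh_eq_hLaurent (q : ℂ) (θ : ℝ) (l : ℂ) : hh q θ l = hLaurent q l (circleMap 0 1 θ) := by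
  simp only [hh, hLaurent, circleMap_zero, ofReal_one, one_mul, Complex.exp_neg]

lemma hLaurent_inv (q l z : ℂ) : hLaurent q l z⁻¹ = hLaurent q l z := by
  rw [hLaurent, hLaurent, inv_inv, mul_comm]

lemma hRatio_inv (q u a z : ℂ) : hRatio q u a z⁻¹ = hRatio q u a z := by
  rw [hRatio, hRatio, hLaurent_inv, hLaurent_inv]

lemma hLaurent_ne_zero (hq : ‖q‖ < 1) (ha : ‖a‖ < 1) (hz : z ∈ sphere (0 : ℂ) 1) :
    hLaurent q a z ≠ 0 := by
  have hz : ‖z‖ = 1 := mem_sphere_zero_iff_norm.1 hz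
  exact mul_ne_zero (qp_ne_zero_of_norm_lt_one hq (norm_mul_lt_one ha hz.le))
    (qp_ne_zero_of_norm_lt_one hq (norm_mul_lt_one ha (by simp [hz])))

lemma hLaurent_eq_mul_hLaurent_q_mul (hq : ‖q‖ < 1) (l z : ℂ) :
    hLaurent q l z = (1 - l * z) * (1 - l * z⁻¹) * hLaurent q (q * l) z := by
  rw [hLaurent, hLaurent, qp_eq_one_sub_mul hq (l * z), qp_eq_one_sub_mul hq (l * z⁻¹)]
  ring_nf

lemma hLaurent_apply_q_mul (hq : ‖q‖ < 1) (hu : u ^ 2 = q) (hu0 : u ≠ 0) (hz : z ≠ 0) :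
    hLaurent q u (q * z) = -(u * z)⁻¹ * hLaurent q u z := by
  have arg_eq : u * (q * z)⁻¹ = (u * z)⁻¹ := by
    rw [← hu]
    field_simp
  have q_mul_arg : q * (u * z)⁻¹ = u * z⁻¹ := by
    rw [← hu]
    field_simp
  rw [hLaurent, hLaurent, arg_eq, qp_eq_one_sub_mul hq (u * z)⁻¹, q_mul_arg,
    qp_eq_one_sub_mul hq (u * z), mul_left_comm u q z]
  field_simp
  ring

lemma hRatio_q_mul_param (hq : ‖q‖ < 1) (h : a * z ≠ 1) (h' : a * z⁻¹ ≠ 1) :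
    hRatio q u (q * a) z = (1 - a * z) * (1 - a * z⁻¹) * hRatio q u a z := by
  rw [hRatio, hRatio, hLaurent_eq_mul_hLaurent_q_mul hq a, mul_div_assoc',
    mul_div_mul_left _ _ (mul_ne_zero (sub_ne_zero.2 h.symm) (sub_ne_zero.2 h'.symm))]

lemma hRatioRegularized_eq (hq : ‖q‖ < 1) (h : a * z⁻¹ ≠ 1) :
    hRatioRegularized q u a z = (1 - a * z⁻¹) * hRatio q u a z := by
  rw [hRatioRegularized, hRatio, hLaurent.eq_def q a, qp_eq_one_sub_mul hq (a * z⁻¹),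
    mul_left_comm (qp q (a * z)), mul_div_assoc', mul_div_mul_left _ _ (sub_ne_zero.2 h.symm)]

lemma mul_hRatioRegularized_apply_q_mul (hq : ‖q‖ < 1) (hu : u ^ 2 = q) (hu0 : u ≠ 0) (hz : z ≠ 0)
    (h : a * z ≠ 1) :
    u * hRatioRegularized q u a (q * z) = (a - z⁻¹) * hRatio q u a z := by
  have hq0 : q ≠ 0 := hu ▸ pow_ne_zero 2 hu0
  have arg_eq : q * (a * (q * z)⁻¹) = a * z⁻¹ := by field_simp
  have ratio : hRatio q u a z * (1 - a * z)
      = hLaurent q u z / (qp q (q * (a * z)) * qp q (a * z⁻¹)) := by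
    rw [hRatio, hLaurent.eq_def q a, qp_eq_one_sub_mul hq (a * z), mul_assoc, div_mul_eq_mul_div,
      mul_comm, mul_div_mul_left _ _ (sub_ne_zero.2 h.symm)]
  calc u * hRatioRegularized q u a (q * z)
      = -z⁻¹ * (hLaurent q u z / (qp q (q * (a * z)) * qp q (a * z⁻¹))) := by
        rw [hRatioRegularized, arg_eq, hLaurent_apply_q_mul hq hu hu0 hz,
          mul_left_comm a q z, mul_inv]
        field_simp
    _ = (a - z⁻¹) * hRatio q u a z := by
        rw [← ratio]
        field_simp
        ring

lemma differentiableAt_hRatioRegularized (hq : ‖q‖ < 1) (ha : ‖a‖ < 1) (hz0 : z ≠ 0)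
    (hqz : ‖q‖ ≤ ‖z‖) (hz : ‖z‖ ≤ 1) : DifferentiableAt ℂ (hRatioRegularized q u a) z := by
  have hqp := differentiable_qp hq
  have num : DifferentiableAt ℂ (hLaurent q u) z := by
    unfold hLaurent
    fun_prop (disch := assumption)
  have outer_ne_zero : qp q (a * z) ≠ 0 := qp_ne_zero_of_norm_lt_one hq (norm_mul_lt_one ha hz)
  have inner_ne_zero : qp q (q * (a * z⁻¹)) ≠ 0 := by
    rw [mul_left_comm]
    refine qp_ne_zero_of_norm_lt_one hq (norm_mul_lt_one ha ?_)
    rw [norm_mul, norm_inv]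
    exact mul_inv_le_one_of_le₀ hqz (norm_nonneg z)
  unfold hRatioRegularized
  fun_prop (disch := simp [*])

lemma continuousOn_hRatio (hq : ‖q‖ < 1) (u : ℂ) :
    ContinuousOn (fun p : ℂ × ℂ ↦ hRatio q u p.1 p.2) (ball 0 1 ×ˢ sphere 0 1) := by
  have hqp := continuous_qp hq
  have inv : ContinuousOn (fun p : ℂ × ℂ ↦ p.2⁻¹) (ball 0 1 ×ˢ sphere 0 1) :=
    continuousOn_snd.inv₀ fun p hp ↦ ne_of_mem_sphere hp.2 one_ne_zero
  refine ContinuousOn.div ?_ ?_ fun p hp ↦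
    hLaurent_ne_zero hq (mem_ball_zero_iff.1 hp.1) hp.2
  all_goals
    unfold hLaurent
    fun_prop

lemma continuousOn_hRatio_right (hq : ‖q‖ < 1) (u : ℂ) (ha : ‖a‖ < 1) :
    ContinuousOn (hRatio q u a) (sphere 0 1) :=
  (continuousOn_hRatio hq u).comp (f := fun z ↦ (a, z)) (by fun_prop)
    fun _ hz ↦ ⟨mem_ball_zero_iff.2 ha, hz⟩

end Laurent

/-- The average `I(a)` of `h(z; u) / h(z; a)` over the unit circle. -/
noncomputable def hRatioAverage (q u a : ℂ) : ℂ := circleAverage (hRatio q u a) 0 1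

/-- The average of `z⁻¹ h(z; u) / h(z; a)` over the unit circle, that is, the Fourier coefficient
of index `1` (and, by symmetry, `-1`) of the integrand. -/
noncomputable def hRatioFourierCoeff (q u a : ℂ) : ℂ :=
  circleAverage (fun z ↦ z⁻¹ * hRatio q u a z) 0 1

/-- The quotient of `I(a)` by its asserted value `(u a; q)_∞ ^ 2 / ((q; q)_∞ (a ^ 2; q)_∞)`, without
the constant factor `(q; q)_∞`. -/
noncomputable def hRatioAverageNormalized (q u a : ℂ) : ℂ :=
  hRatioAverage q u a * qp q (a ^ 2) / qp q (u * a) ^ 2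

section Average

variable {q u a : ℂ}

lemma circleAverage_mul_hRatio (q u a : ℂ) :
    circleAverage (fun z ↦ z * hRatio q u a z) 0 1 = hRatioFourierCoeff q u a := by
  rw [← circleAverage_zero_one_congr_inv]
  simp only [hRatio_inv, hRatioFourierCoeff]

lemma circleAverage_trinomial_mul_hRatio (hq : ‖q‖ < 1) (u : ℂ) (ha : ‖a‖ < 1) (b c d : ℂ) :
    circleAverage (fun z ↦ (b + c * z + d * z⁻¹) * hRatio q u a z) 0 1
      = b * hRatioAverage q u a + (c + d) * hRatioFourierCoeff q u a := by
  have cont := continuousOn_hRatio_right hq u ha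
  have cont_inv : ContinuousOn (fun z : ℂ ↦ z⁻¹) (sphere 0 1) :=
    continuousOn_inv₀.mono fun z hz ↦ ne_of_mem_sphere hz one_ne_zero
  have integrable {f : ℂ → ℂ} (hf : ContinuousOn f (sphere 0 1)) : CircleIntegrable f 0 1 :=
    hf.circleIntegrable zero_le_one
  have expand (z : ℂ) : (b + c * z + d * z⁻¹) * hRatio q u a z
      = b • hRatio q u a z + c • (z * hRatio q u a z) + d • (z⁻¹ * hRatio q u a z) := by
    simp only [smul_eq_mul]
    ring
  simp only [expand]
  rw [circleAverage_fun_add (integrable (by fun_prop)) (integrable (by fun_prop)),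
    circleAverage_fun_add (integrable (by fun_prop)) (integrable (by fun_prop)),
    circleAverage_fun_smul, circleAverage_fun_smul, circleAverage_fun_smul,
    circleAverage_mul_hRatio, ← hRatioAverage, ← hRatioFourierCoeff]
  simp only [smul_eq_mul]
  ring

lemma circleAverage_hRatioRegularized_apply_q_mul (hq0 : q ≠ 0) (hq : ‖q‖ < 1) (u : ℂ)
    (ha : ‖a‖ < 1) :
    circleAverage (fun z ↦ hRatioRegularized q u a (q * z)) 0 1
      = circleAverage (hRatioRegularized q u a) 0 1 := by
  have differentiable (z : ℂ) (hqz : ‖q‖ ≤ ‖z‖) (hz : ‖z‖ ≤ 1) :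
      DifferentiableAt ℂ (hRatioRegularized q u a) z :=
    differentiableAt_hRatioRegularized hq ha
      (norm_pos_iff.1 ((norm_pos_iff.2 hq0).trans_le hqz)) hqz hz
  rw [circleAverage_comp_const_mul, mul_one]
  refine (circleAverage_eq_of_differentiable_on_annulus (norm_pos_iff.2 hq0) hq.le
    (fun z hz ↦ ?_) fun z hz ↦ ?_).symm
  · simp only [Set.mem_sdiff, mem_closedBall_zero_iff, mem_ball_zero_iff, not_lt] at hz
    exact (differentiable z hz.2 hz.1).continuousAt.continuousWithinAt
  · simp only [Set.mem_sdiff, mem_closedBall_zero_iff, mem_ball_zero_iff, not_le] at hz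
    exact differentiable z hz.2.le hz.1.le

lemma one_sub_mul_hRatioFourierCoeff (hq0 : q ≠ 0) (hq : ‖q‖ < 1) (hu : u ^ 2 = q) (ha : ‖a‖ < 1) :
    (1 - u * a) * hRatioFourierCoeff q u a = (a - u) * hRatioAverage q u a := by
  have hu0 : u ≠ 0 := (pow_ne_zero_iff two_ne_zero).1 (by rwa [hu])
  have outer : circleAverage (hRatioRegularized q u a) 0 1
      = hRatioAverage q u a - a * hRatioFourierCoeff q u a := by
    have on_circle : Set.EqOn (hRatioRegularized q u a)
        (fun z ↦ (1 + 0 * z + -a * z⁻¹) * hRatio q u a z) (sphere 0 |1|) := fun z hz ↦ by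
      rw [abs_one] at hz
      rw [hRatioRegularized_eq hq (mul_ne_one_of_mem_sphere ha (inv_mem_sphere_zero_one hz))]
      ring
    rw [circleAverage_congr_sphere on_circle, circleAverage_trinomial_mul_hRatio hq u ha]
    ring
  have inner : u * circleAverage (fun z ↦ hRatioRegularized q u a (q * z)) 0 1
      = a * hRatioAverage q u a - hRatioFourierCoeff q u a := by
    have on_circle : Set.EqOn (fun z ↦ u • hRatioRegularized q u a (q * z))
        (fun z ↦ (a + 0 * z + -1 * z⁻¹) * hRatio q u a z) (sphere 0 |1|) := fun z hz ↦ by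
      rw [abs_one] at hz
      simp only [smul_eq_mul]
      rw [mul_hRatioRegularized_apply_q_mul hq hu hu0 (ne_of_mem_sphere hz one_ne_zero)
        (mul_ne_one_of_mem_sphere ha hz)]
      ring
    rw [← smul_eq_mul, ← circleAverage_fun_smul, circleAverage_congr_sphere on_circle,
      circleAverage_trinomial_mul_hRatio hq u ha]
    ring
  rw [circleAverage_hRatioRegularized_apply_q_mul hq0 hq u ha, outer] at inner
  linear_combination inner

lemma hRatioAverage_q_mul (hq : ‖q‖ < 1) (u : ℂ) (ha : ‖a‖ < 1) :
    hRatioAverage q u (q * a)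
      = (1 + a ^ 2) * hRatioAverage q u a - 2 * a * hRatioFourierCoeff q u a := by
  have on_circle : Set.EqOn (hRatio q u (q * a))
      (fun z ↦ (1 + a ^ 2 + -a * z + -a * z⁻¹) * hRatio q u a z) (sphere 0 |1|) := fun z hz ↦ by
    rw [abs_one] at hz
    have hz0 : z ≠ 0 := ne_of_mem_sphere hz one_ne_zero
    rw [hRatio_q_mul_param hq (mul_ne_one_of_mem_sphere ha hz)
      (mul_ne_one_of_mem_sphere ha (inv_mem_sphere_zero_one hz))]
    field_simp
    ring
  rw [hRatioAverage, circleAverage_congr_sphere on_circle,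
    circleAverage_trinomial_mul_hRatio hq u ha]
  ring

lemma one_sub_mul_hRatioAverage_q_mul (hq0 : q ≠ 0) (hq : ‖q‖ < 1) (hu : u ^ 2 = q)
    (ha : ‖a‖ < 1) :
    (1 - u * a) * hRatioAverage q u (q * a)
      = (1 - a ^ 2) * (1 + u * a) * hRatioAverage q u a := by
  rw [hRatioAverage_q_mul hq u ha]
  linear_combination (-2 * a) * one_sub_mul_hRatioFourierCoeff hq0 hq hu ha

lemma hRatioAverageNormalized_q_mul (hq0 : q ≠ 0) (hq : ‖q‖ < 1) (hu : u ^ 2 = q)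
    (ha : ‖a‖ < 1) : hRatioAverageNormalized q u (q * a) = hRatioAverageNormalized q u a := by
  have qp_sq : qp q (a ^ 2) = (1 - a ^ 2) * (1 + u * a) * (1 - u * a) * qp q ((q * a) ^ 2) := by
    rw [qp_eq_one_sub_mul hq (a ^ 2), qp_eq_one_sub_mul hq (q * a ^ 2),
      show q * (q * a ^ 2) = (q * a) ^ 2 by ring, ← hu]
    ring
  have qp_mul : qp q (u * a) = (1 - u * a) * qp q (u * (q * a)) := by
    rw [qp_eq_one_sub_mul hq (u * a), mul_left_comm]
  have qp_mul_ne_zero : qp q (u * a) ≠ 0 :=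
    qp_ne_zero_of_norm_lt_one hq (norm_mul_lt_one (norm_lt_one_of_sq_eq hq hu) ha.le)
  rw [qp_mul, mul_ne_zero_iff] at qp_mul_ne_zero
  rw [hRatioAverageNormalized, hRatioAverageNormalized, qp_sq, qp_mul,
    div_eq_div_iff (pow_ne_zero 2 qp_mul_ne_zero.2)
      (pow_ne_zero 2 (mul_ne_zero qp_mul_ne_zero.1 qp_mul_ne_zero.2))]
  linear_combination (1 - u * a) * qp q ((q * a) ^ 2) * qp q (u * (q * a)) ^ 2 *
    one_sub_mul_hRatioAverage_q_mul hq0 hq hu ha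

lemma continuousAt_hRatioAverageNormalized_zero (hq : ‖q‖ < 1) (u : ℂ) :
    ContinuousAt (hRatioAverageNormalized q u) 0 := by
  have hqp := continuous_qp hq
  have average : ContinuousAt (hRatioAverage q u) 0 := by
    refine (continuousOn_circleAverage_of_continuousOn_uncurry ?_).continuousAt
      (ball_mem_nhds 0 one_pos)
    rw [abs_one]
    exact continuousOn_hRatio hq u
  refine (average.mul (by fun_prop)).div (by fun_prop) (pow_ne_zero 2 ?_)
  exact qp_ne_zero_of_norm_lt_one hq (by simp)

lemma hRatioAverage_self (hq : ‖q‖ < 1) (hu : ‖u‖ < 1) : hRatioAverage q u u = 1 :=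
  circleAverage_const_on_circle fun z hz ↦
    div_self (hLaurent_ne_zero hq hu (by rwa [abs_one] at hz))

lemma hRatioAverageNormalized_eq (hq0 : q ≠ 0) (hq : ‖q‖ < 1) (hu : u ^ 2 = q) (ha : ‖a‖ < 1) :
    hRatioAverageNormalized q u a = (qp q q)⁻¹ := by
  have hu1 : ‖u‖ < 1 := norm_lt_one_of_sq_eq hq hu
  have const {b : ℂ} (hb : ‖b‖ < 1) :
      hRatioAverageNormalized q u b = hRatioAverageNormalized q u 0 :=
    eq_apply_zero_of_apply_mul_eq hq (continuousAt_hRatioAverageNormalized_zero hq u)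
      (fun _ ↦ hRatioAverageNormalized_q_mul hq0 hq hu) hb
  have qp_self_ne_zero : qp q q ≠ 0 := qp_ne_zero_of_norm_lt_one hq hq
  rw [const ha, ← const hu1, hRatioAverageNormalized, hRatioAverage_self hq hu1, ← sq, hu]
  field_simp

lemma hRatioAverage_eq (hq0 : q ≠ 0) (hq : ‖q‖ < 1) (hu : u ^ 2 = q) (ha : ‖a‖ < 1) :
    hRatioAverage q u a = qp q (u * a) ^ 2 / (qp q q * qp q (a ^ 2)) := by
  have qp_sq_ne_zero : qp q (a ^ 2) ≠ 0 :=
    qp_ne_zero_of_norm_lt_one hq (sq a ▸ norm_mul_lt_one ha ha.le)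
  have qp_mul_ne_zero : qp q (u * a) ≠ 0 :=
    qp_ne_zero_of_norm_lt_one hq (norm_mul_lt_one (norm_lt_one_of_sq_eq hq hu) ha.le)
  have normalized := hRatioAverageNormalized_eq hq0 hq hu ha
  rw [hRatioAverageNormalized, div_eq_iff (pow_ne_zero 2 qp_mul_ne_zero),
    ← eq_div_iff qp_sq_ne_zero] at normalized
  rw [normalized, inv_mul_eq_div, div_div]

end Average

theorem integral_step_one (q u a : ℂ) (hq0 : 0 < ‖q‖) (hq : ‖q‖ < 1) (hu : u ^ 2 = q)
    (ha : ‖a‖ < 1) (ha0 : a ≠ 0) :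
    ∫ θ in (0:ℝ)..Real.pi, hh q θ u / hh q θ a
      = (Real.pi : ℂ) * (qp q (u * a)) ^ 2 / (qp q q * qp q (a ^ 2)) := by
  have integrable : CircleIntegrable (hRatio q u a) 0 1 :=
    (continuousOn_hRatio_right hq u ha).circleIntegrable zero_le_one
  calc ∫ θ in (0:ℝ)..Real.pi, hh q θ u / hh q θ a
      = ∫ θ in (0:ℝ)..π, hRatio q u a (circleMap 0 1 θ) := by
        simp only [hh_eq_hLaurent, hRatio]
    _ = π * hRatioAverage q u a := by
        rw [integral_zero_pi_eq_pi_smul_circleAverage integrable fun z _ ↦ hRatio_inv q u a z,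
          ← hRatioAverage, real_smul]
    _ = π * qp q (u * a) ^ 2 / (qp q q * qp q (a ^ 2)) := by
        rw [hRatioAverage_eq (norm_pos_iff.1 hq0) hq hu ha, mul_div_assoc]
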